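/- (Multiset version of the main theorem.) In the typed dinner game, fix a set L ⊆ Fin m of lout turns; the preference at turn t is the typed lout order of P t if t ∈ L, and some fixed strict partial order extending the typed knight order of P t if t ∉ L. Let σ be the permutation of Fin m listing the turns of L in increasing order followed by the turns not in L in decreasing order, and consider the all-lout typed game with turn order P ∘ σ, in which at each turn the mover selects a morsel whose type is <-maximal for her among remaining morsels. Then for every optimal play a of the mixed typed game, every greedy play b of the rearranged all-lout game, and every player i, the multiset of types τ(A_i(a)) (with turn order P) equals the multiset of types of player i's plate under b (with turn order P ∘ σ). -/

import Mathlib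

/-- The plate of player `i` under play sequence `a`, with turn order `P`. -/
def plate {M : Type*} [DecidableEq M] {m k : ℕ} (P : Fin m → Fin k) (a : Fin m → M)
    (i : Fin k) : Finset M :=
  (Finset.univ.filter fun t => P t = i).image a

/-- Pairwise comparison of plates with respect to a morsel ordering `le`. -/
def PlateLE {M : Type*} (le : M → M → Prop) (A B : Finset M) : Prop :=
  ∃ f : A → B, Function.Bijective f ∧ ∀ x : A, le x.1 (f x).1

/-- Strict pairwise comparison of plates. -/
def PlateLT {M : Type*} (le : M → M → Prop) (A B : Finset M) : Prop :=
  PlateLE le A B ∧ A ≠ B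

/-- The knight order of player `i` on play sequences. -/
def KnightLT {M : Type*} [DecidableEq M] {m k : ℕ} (P : Fin m → Fin k)
    (ord : Fin k → LinearOrder M) (i : Fin k) (a b : Fin m → M) : Prop :=
  ((∀ j, j ≠ i → PlateLE (ord j).le (plate P a j) (plate P b j)) ∧
      ∃ j, j ≠ i ∧ PlateLT (ord j).le (plate P a j) (plate P b j)) ∨
    ((∀ j, j ≠ i → plate P a j = plate P b j) ∧
      PlateLT (ord i).le (plate P a i) (plate P b i))

/-- The lout order of player `i` on play sequences. -/
def LoutLT {M : Type*} {m k : ℕ} (P : Fin m → Fin k)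
    (ord : Fin k → LinearOrder M) (i : Fin k) (a b : Fin m → M) : Prop :=
  ∃ t : Fin m, P t = i ∧ (∀ s : Fin m, s < t → a s = b s) ∧ (ord i).lt (a t) (b t)

/-- A strategy profile: assigns to each duplicate-free history of length `< m` a
morsel not occurring in it. -/
structure Strategy (M : Type*) (m : ℕ) where
  choice : List M → M
  valid : ∀ h : List M, h.Nodup → h.length < m → choice h ∉ h

/-- Iteratively extend a history by the choices prescribed by `s`. -/
def Strategy.extend {M : Type*} {m : ℕ} (s : Strategy M m) : ℕ → List M → List M
  | 0, h => h
  | j + 1, h => Strategy.extend s j (h ++ [s.choice h])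

/-- The contingent outcome of strategy profile `s` from history `h`, as a play
sequence. -/
def Strategy.play {M : Type*} {m : ℕ} (s : Strategy M m) (h : List M) : Fin m → M :=
  fun t => (s.extend (m - h.length) h).getD t.val (s.choice [])

/-- Subgame perfect equilibrium with respect to preferences `pref t` at turn `t`. -/
def SPE {M : Type*} {m : ℕ}
    (pref : Fin m → (Fin m → M) → (Fin m → M) → Prop) (s : Strategy M m) : Prop :=
  ∀ t : Fin m, ∀ h : List M, h.Nodup → h.length = t.val →
    ∀ x : M, x ∉ h → ¬ pref t (s.play h) (s.play (h ++ [x]))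

/-- Optimal plays: contingent outcomes of subgame perfect equilibria from the
empty history. -/
def OptimalPlay {M : Type*} {m : ℕ}
    (pref : Fin m → (Fin m → M) → (Fin m → M) → Prop) (a : Fin m → M) : Prop :=
  ∃ s : Strategy M m, SPE pref s ∧ a = s.play []

/-- The greedy play: at each turn `t` the mover `P t` selects her favourite
remaining morsel. -/
def IsGreedy {M : Type*} {m k : ℕ} (P : Fin m → Fin k) (ord : Fin k → LinearOrder M)
    (a : Fin m → M) : Prop :=
  Function.Injective a ∧
    ∀ t : Fin m, ∀ x : M, (∀ s : Fin m, s < t → a s ≠ x) → x ≠ a t →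
      (ord (P t)).lt x (a t)

/-- Typed pairwise comparison of plates: compare via the types of morsels. -/
def TPlateLE {M T : Type*} (le : T → T → Prop) (τ : M → T) (A B : Finset M) : Prop :=
  ∃ f : A → B, Function.Bijective f ∧ ∀ x : A, le (τ x.1) (τ (f x).1)

/-- Strict typed pairwise comparison: additionally the multisets of types differ. -/
def TPlateLT {M T : Type*} (le : T → T → Prop) (τ : M → T) (A B : Finset M) : Prop :=
  TPlateLE le τ A B ∧ A.val.map τ ≠ B.val.map τ

/-- Typed knight order of player `i`. -/
def TKnightLT {M T : Type*} [DecidableEq M] {m k : ℕ} (P : Fin m → Fin k) (τ : M → T)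
    (ord : Fin k → LinearOrder T) (i : Fin k) (a b : Fin m → M) : Prop :=
  ((∀ j, j ≠ i → TPlateLE (ord j).le τ (plate P a j) (plate P b j)) ∧
      ∃ j, j ≠ i ∧ TPlateLT (ord j).le τ (plate P a j) (plate P b j)) ∨
    ((∀ j, j ≠ i → (plate P a j).val.map τ = (plate P b j).val.map τ) ∧
      TPlateLT (ord i).le τ (plate P a i) (plate P b i))

/-- Typed lout order of player `i`. -/
def TLoutLT {M T : Type*} {m k : ℕ} (P : Fin m → Fin k) (τ : M → T)
    (ord : Fin k → LinearOrder T) (i : Fin k) (a b : Fin m → M) : Prop :=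
  ∃ t : Fin m, P t = i ∧ (∀ s : Fin m, s < t → a s = b s) ∧
    (ord i).lt (τ (a t)) (τ (b t))

/-- A greedy play of the typed all-lout game: at each turn the mover selects a
morsel whose type is maximal for her among the remaining morsels. -/
def TIsGreedy {M T : Type*} {m k : ℕ} (P : Fin m → Fin k) (τ : M → T)
    (ord : Fin k → LinearOrder T) (a : Fin m → M) : Prop :=
  Function.Injective a ∧
    ∀ t : Fin m, ∀ x : M, (∀ s : Fin m, s < t → a s ≠ x) →
      ¬ (ord (P t)).lt (τ (a t)) (τ x)


/-- Greedy rule on multisets of types, as a relation. -/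
inductive Gr {T : Type*} {k : ℕ} (ord : Fin k → LinearOrder T) :
    List (Fin k) → Multiset T → (Fin k → Multiset T) → Multiset T → Prop
  | nil (R : Multiset T) : Gr ord [] R 0 R
  | cons (j : Fin k) (Q : List (Fin k)) (x : T) (R : Multiset T) (D : Fin k → Multiset T)
      (F : Multiset T) (hx : ∀ y ∈ R, (ord j).le y x) (h : Gr ord Q R D F) :
      Gr ord (j :: Q) (x ::ₘ R) (Pi.single j {x} + D) F

section GrLemmas

variable {T : Type*} {k : ℕ} {ord : Fin k → LinearOrder T}

theorem exists_max_mset (o : LinearOrder T) (R : Multiset T) (h : R ≠ 0) :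
    ∃ z ∈ R, ∀ y ∈ R, o.le y z := by
  induction R using Multiset.induction with
  | empty => exact absurd rfl h
  | cons a R ih =>
    by_cases hR : R = 0
    · subst hR
      exact ⟨a, by simp, by simp⟩
    · obtain ⟨z, hz, hm⟩ := ih hR
      rcases le_total a z with h1 | h1
      · refine ⟨z, by simp [hz], ?_⟩
        intro y hy
        rcases Multiset.mem_cons.1 hy with rfl | hy
        · exact h1
        · exact hm y hy
      · refine ⟨a, by simp, ?_⟩
        intro y hy
        rcases Multiset.mem_cons.1 hy with rfl | hy
        · exact le_refl _
        · exact le_trans (hm y hy) h1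

theorem Gr.unique {Q : List (Fin k)} {R : Multiset T} {D F} (h : Gr ord Q R D F) :
    ∀ {D' F'}, Gr ord Q R D' F' → D = D' ∧ F = F' := by
  induction h with
  | nil R =>
    intro D' F' h'
    cases h'
    exact ⟨rfl, rfl⟩
  | cons j Q x R D F hx h ih =>
    intro D' F' h'
    generalize hS : x ::ₘ R = S at h'
    cases h' with
    | cons _ _ x' R' D' _ hx' h' =>
      have hxx : x = x' := by
        have h1 : x ∈ x' ::ₘ R' := hS ▸ Multiset.mem_cons_self x R
        have h2 : x' ∈ x ::ₘ R := hS ▸ Multiset.mem_cons_self x' R'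
        rcases Multiset.mem_cons.1 h1 with e | h1
        · exact e
        rcases Multiset.mem_cons.1 h2 with e | h2
        · exact e.symm
        exact (ord j).le_antisymm _ _ (hx' _ h1) (hx _ h2)
      subst hxx
      have := (Multiset.cons_inj_right x).1 hS
      subst this
      obtain ⟨rfl, rfl⟩ := ih h'
      exact ⟨rfl, rfl⟩

theorem Gr.exists (Q : List (Fin k)) : ∀ (R : Multiset T), Q.length ≤ R.card →
    ∃ D F, Gr ord Q R D F := by
  induction Q with
  | nil => exact fun R _ => ⟨_, _, Gr.nil R⟩
  | cons j Q ih =>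
    intro R hR
    have hR0 : R ≠ 0 := by
      rintro rfl
      simp at hR
    obtain ⟨z, hz, hm⟩ := exists_max_mset (ord j) R hR0
    obtain ⟨R', rfl⟩ := Multiset.exists_cons_of_mem hz
    obtain ⟨D, F, h⟩ := ih R' (by simpa using hR)
    exact ⟨_, _, Gr.cons j Q z R' D F (fun y hy => hm y (by simp [hy])) h⟩

theorem Gr.card {Q : List (Fin k)} {R : Multiset T} {D F} (h : Gr ord Q R D F) :
    R.card = Q.length + F.card := by
  induction h with
  | nil R => simp
  | cons j Q x R D F hx h ih => simp [ih]; omega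

theorem Gr.conserve {Q : List (Fin k)} {R : Multiset T} {D F} (h : Gr ord Q R D F) :
    R = (∑ j, D j) + F := by
  induction h with
  | nil R => simp
  | cons j Q x R D F hx h ih =>
    have : ∑ i, (Pi.single j {x} + D : Fin k → Multiset T) i = {x} + ∑ i, D i := by
      simp [Finset.sum_add_distrib]
    rw [this, ih, add_assoc, Multiset.singleton_add]

theorem Gr.snoc {Q : List (Fin k)} {R : Multiset T} {D F} (h : Gr ord Q R D F) :
    ∀ (i : Fin k) (z : T) (F' : Multiset T), F = z ::ₘ F' → (∀ y ∈ F', (ord i).le y z) →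
    Gr ord (Q ++ [i]) R (D + Pi.single i {z}) F' := by
  induction h with
  | nil R =>
    rintro i z F' rfl hz
    have := Gr.cons (ord := ord) i [] z F' 0 F' hz (Gr.nil _)
    simpa using this
  | cons j Q x R D F hx h ih =>
    intro i z F' hF hz
    have := Gr.cons j _ x R _ _ hx (ih i z F' hF hz)
    simpa [add_assoc] using this

theorem Gr.unpicked {Q : List (Fin k)} {R : Multiset T} {D F} (h : Gr ord Q R D F) :
    ∀ (z : T) (F' : Multiset T), F = z ::ₘ F' →
    ∃ R0, R = z ::ₘ R0 ∧ Gr ord Q R0 D F' := by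
  induction h with
  | nil R =>
    rintro z F' rfl
    exact ⟨F', rfl, Gr.nil _⟩
  | cons j Q x R D F hx h ih =>
    intro z F' hF
    obtain ⟨R0, rfl, h0⟩ := ih z F' hF
    exact ⟨x ::ₘ R0, Multiset.cons_swap _ _ _,
      Gr.cons j Q x R0 D F' (fun y hy => hx y (by simp [hy])) h0⟩

theorem rel_add_single {j i : Fin k} {x y : T} {D E : Fin k → Multiset T}
    (h : Multiset.Rel (ord i).le (E i) (D i)) (hxy : (ord j).le y x) :
    Multiset.Rel (ord i).le ((Pi.single j {y} + E : Fin k → Multiset T) i)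
      ((Pi.single j {x} + D : Fin k → Multiset T) i) := by
  by_cases hij : i = j
  · subst hij
    simpa using Multiset.Rel.cons hxy h
  · simpa [hij] using h

theorem Gr.compare {Q : List (Fin k)} {R E G} (h : Gr ord Q R E G) :
    ∀ (y : T) (D F), Gr ord Q (y ::ₘ R) D F →
    ∃ w, F = w ::ₘ G ∧ ∀ j, Multiset.Rel (ord j).le (E j) (D j) := by
  induction h with
  | nil R =>
    intro y D F h'
    cases h'
    exact ⟨y, rfl, fun j => by simp⟩
  | cons j Q x R E G hx h ih =>
    intro y D F h'
    generalize hS : y ::ₘ x ::ₘ R = S at h'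
    cases h' with
    | cons _ _ z R' D' _ hz h' =>
      by_cases hzy : z = y
      · subst hzy
        have := (Multiset.cons_inj_right z).1 hS
        subst this
        obtain ⟨w, hw, hr⟩ := ih x D' F h'
        exact ⟨w, hw, fun i => rel_add_single (hr i) (hz x (by simp))⟩
      · have hzx : z = x := by
          have h1 : z ∈ y ::ₘ x ::ₘ R := hS ▸ Multiset.mem_cons_self z R'
          have h2 : x ∈ z ::ₘ R' := hS ▸ (by simp)
          simp only [Multiset.mem_cons, hzy, false_or] at h1 h2
          rcases h1 with e | h1
          · exact e
          rcases h2 with e | h2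
          · exact e.symm
          exact (ord j).le_antisymm _ _ (hx _ h1) (hz _ h2)
        subst hzx
        rw [Multiset.cons_swap] at hS
        have := (Multiset.cons_inj_right z).1 hS
        subst this
        obtain ⟨w, hw, hr⟩ := ih y D' F h'
        exact ⟨w, hw, fun i => rel_add_single (hr i) ((ord j).le_refl _)⟩

end GrLemmas

section PlateLemmas

variable {M T : Type*} [DecidableEq M] {m k : ℕ}

theorem exists_bijOn_of_rel (p : M → M → Prop) (A : Finset M) : ∀ B : Finset M,
    Multiset.Rel p A.val B.val → ∃ f : M → M, Set.BijOn f A B ∧ ∀ x ∈ A, p x (f x) := by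
  induction A using Finset.induction_on with
  | empty =>
    intro B h
    have : B = ∅ := by simpa using h
    subst this
    exact ⟨id, by simp, by simp⟩
  | insert a A ha ih =>
    intro B h
    rw [Finset.insert_val_of_notMem ha, Multiset.rel_cons_left] at h
    obtain ⟨b, B', hab, hr, hB⟩ := h
    have hbB : b ∈ B := by
      rw [← Finset.mem_val, hB]; simp
    have hB' : B' = (B.erase b).val := by
      rw [Finset.erase_val, hB]; simp
    subst hB'
    obtain ⟨f, hf, hp⟩ := ih _ hr
    have hne : ∀ x ∈ A, x ≠ a := fun x hx e => ha (e ▸ hx)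
    have heq : Set.EqOn (Function.update f a b) f A := by
      intro x hx
      simp [Function.update_of_ne (hne x hx)]
    refine ⟨Function.update f a b, ?_, ?_⟩
    · have h1 : Set.BijOn (Function.update f a b) A (B.erase b) := hf.congr heq.symm
      have h2 := h1.insert (a := a) (by simp)
      simpa [hbB] using h2
    · intro x hx
      rcases Finset.mem_insert.1 hx with rfl | hx
      · simpa using hab
      · rw [heq hx]; exact hp x hx

theorem tplateLE_of_rel (le : T → T → Prop) (τ : M → T) (A B : Finset M)
    (h : Multiset.Rel le (A.val.map τ) (B.val.map τ)) : TPlateLE le τ A B := by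
  rw [Multiset.rel_map] at h
  obtain ⟨f, hf, hp⟩ := exists_bijOn_of_rel _ A B h
  refine ⟨fun x => ⟨f x.1, hf.mapsTo x.2⟩, ⟨?_, ?_⟩, fun x => hp x.1 x.2⟩
  · intro x y hxy
    exact Subtype.ext (hf.injOn x.2 y.2 (by simpa using hxy))
  · rintro ⟨y, hy⟩
    obtain ⟨x, hx, rfl⟩ := hf.surjOn hy
    exact ⟨⟨x, hx⟩, rfl⟩

/-- Vector of type multisets collected over a list of turns. -/
def TL (P : Fin m → Fin k) (τ : M → T) (a : Fin m → M) (l : List (Fin m)) :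
    Fin k → Multiset T :=
  (l.map fun t => (Pi.single (P t) {τ (a t)} : Fin k → Multiset T)).sum

theorem plate_types (P : Fin m → Fin k) (τ : M → T) (a : Fin m → M)
    (ha : Function.Injective a) (i : Fin k) :
    (plate P a i).val.map τ = TL P τ a (List.finRange m) i := by
  have h1 : ∀ l : List (Fin m), TL P τ a l i =
      (((l.filter fun t => P t = i).map a).map τ : List T) := by
    intro l
    induction l with
    | nil => simp [TL]
    | cons t l ih =>
      have : TL P τ a (t :: l) i = (Pi.single (P t) {τ (a t)} : Fin k → Multiset T) i
          + TL P τ a l i := by simp [TL]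
      rw [this, ih]
      by_cases h : P t = i
      · subst h; simp
      · have h' : i ≠ P t := fun e => h e.symm
        simp [h, h']
  rw [h1, plate, Finset.image_val_of_injOn ha.injOn]
  simp only [Multiset.map_map]
  rw [Finset.filter_val, List.map_map]
  rfl

theorem knight_of (P : Fin m → Fin k) (τ : M → T) (ord : Fin k → LinearOrder T)
    (i : Fin k) (a b : Fin m → M) (ha : Function.Injective a) (hb : Function.Injective b)
    (hne : TL P τ a (List.finRange m) ≠ TL P τ b (List.finRange m))
    (h1 : ∀ j, j ≠ i → Multiset.Rel (ord j).le (TL P τ a (List.finRange m) j)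
      (TL P τ b (List.finRange m) j))
    (h2 : (∀ j, j ≠ i → TL P τ a (List.finRange m) j = TL P τ b (List.finRange m) j) →
      Multiset.Rel (ord i).le (TL P τ a (List.finRange m) i) (TL P τ b (List.finRange m) i)) :
    TKnightLT P τ ord i a b := by
  simp only [← plate_types P τ a ha, ← plate_types P τ b hb] at h1 h2
  by_cases hall : ∀ j, j ≠ i → (plate P a j).val.map τ = (plate P b j).val.map τ
  · right
    refine ⟨hall, tplateLE_of_rel _ _ _ _ (h2 hall), fun e => hne ?_⟩
    funext j
    rw [← plate_types P τ a ha, ← plate_types P τ b hb]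
    by_cases hj : j = i
    · subst hj; exact e
    · exact hall j hj
  · left
    push Not at hall
    obtain ⟨j, hj, hd⟩ := hall
    exact ⟨fun j hj => tplateLE_of_rel _ _ _ _ (h1 j hj), j, hj,
      tplateLE_of_rel _ _ _ _ (h1 j hj), hd⟩

end PlateLemmas

section GameLemmas

variable {M T : Type*} {m k : ℕ}

theorem Strategy.extend_length (s : Strategy M m) (j : ℕ) : ∀ h : List M,
    (s.extend j h).length = h.length + j := by
  induction j with
  | zero => intro h; rfl
  | succ j ih => intro h; rw [Strategy.extend, ih]; simp; omega

theorem Strategy.extend_prefix (s : Strategy M m) (j : ℕ) : ∀ h : List M,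
    h <+: s.extend j h := by
  induction j with
  | zero => intro h; exact List.prefix_refl h
  | succ j ih => intro h; exact (List.prefix_append _ _).trans (ih _)

theorem nodup_snoc {h : List M} (hn : h.Nodup) {x : M} (hx : x ∉ h) : (h ++ [x]).Nodup := by
  rw [List.nodup_append]
  refine ⟨hn, by simp, ?_⟩
  intro a ha b hb e
  rw [List.mem_singleton] at hb
  exact hx (hb ▸ e ▸ ha)

theorem Strategy.extend_nodup (s : Strategy M m) (j : ℕ) : ∀ h : List M, h.Nodup →
    h.length + j ≤ m → (s.extend j h).Nodup := by
  induction j with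
  | zero => intro h hn _; exact hn
  | succ j ih =>
    intro h hn hl
    exact ih _ (nodup_snoc hn (s.valid h hn (by omega))) (by simp; omega)

theorem Strategy.play_injective (s : Strategy M m) (h : List M) (hn : h.Nodup)
    (hl : h.length ≤ m) : Function.Injective (s.play h) := by
  intro u v huv
  have hlen := s.extend_length (m - h.length) h
  have hnd := s.extend_nodup (m - h.length) h hn (by omega)
  unfold Strategy.play at huv
  rw [List.getD_eq_getElem _ _ (by omega), List.getD_eq_getElem _ _ (by omega)] at huv
  exact Fin.ext ((List.Nodup.getElem_inj_iff hnd).1 huv)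

theorem Strategy.play_getElem (s : Strategy M m) (h : List M) (t : Fin m)
    (ht : t.val < h.length) : s.play h t = h[t.val] := by
  unfold Strategy.play
  have hp := s.extend_prefix (m - h.length) h
  rw [List.getD_eq_getElem _ _ (lt_of_lt_of_le ht hp.length_le)]
  exact (hp.getElem ht).symm

theorem Strategy.play_step (s : Strategy M m) (h : List M) (hl : h.length < m) :
    s.play h = s.play (h ++ [s.choice h]) := by
  unfold Strategy.play
  have : m - h.length = (m - (h ++ [s.choice h]).length) + 1 := by simp; omega
  rw [this]
  rfl

/-- Multiset of types of morsels not in the history. -/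
def remT [Fintype M] [DecidableEq M] (τ : M → T) (h : List M) : Multiset T :=
  ((Finset.univ : Finset M) \ h.toFinset).val.map τ

theorem remT_snoc [Fintype M] [DecidableEq M] (τ : M → T) (h : List M) (x : M) (hx : x ∉ h) :
    remT τ h = τ x ::ₘ remT τ (h ++ [x]) := by
  unfold remT
  rw [← Multiset.map_cons, ← Finset.insert_val_of_notMem (by simp)]
  congr 2
  ext y
  by_cases hy : y = x
  · subst hy; simp [hx]
  · simp [hy]

theorem remT_card [Fintype M] [DecidableEq M] (τ : M → T) (h : List M) (hn : h.Nodup) :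
    (remT τ h).card = Fintype.card M - h.length := by
  unfold remT
  rw [Multiset.card_map, Finset.card_val, Finset.card_univ_sdiff, List.toFinset_card_of_nodup hn]

theorem mem_remT [Fintype M] [DecidableEq M] (τ : M → T) (h : List M) (z : T) :
    z ∈ remT τ h ↔ ∃ x, x ∉ h ∧ τ x = z := by
  simp only [remT, Multiset.mem_map, Finset.mem_val, Finset.mem_sdiff, Finset.mem_univ, true_and,
    List.mem_toFinset]

/-- Rearranged order of a list of turns. -/
def ordr (L : Finset (Fin m)) : List (Fin m) → List (Fin m)
  | [] => []
  | t :: l => if t ∈ L then t :: ordr L l else ordr L l ++ [t]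

theorem ordr_eq (L : Finset (Fin m)) (l : List (Fin m)) :
    ordr L l = l.filter (fun t => t ∈ L) ++ (l.filter (fun t => t ∉ L)).reverse := by
  induction l with
  | nil => rfl
  | cons t l ih =>
    by_cases h : t ∈ L <;> simp [ordr, h, ih]

theorem ordr_length (L : Finset (Fin m)) (l : List (Fin m)) :
    (ordr L l).length = l.length := by
  induction l with
  | nil => rfl
  | cons t l ih =>
    by_cases h : t ∈ L <;> simp [ordr, h, ih]

theorem ordr_perm (L : Finset (Fin m)) (l : List (Fin m)) :
    (ordr L l).Perm l := by
  induction l with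
  | nil => exact List.Perm.refl _
  | cons t l ih =>
    by_cases h : t ∈ L
    · simp only [ordr, h, if_true]; exact ih.cons t
    · simp only [ordr, h, if_false]
      exact (List.perm_append_singleton _ _).trans (ih.cons t)

theorem ordr_finRange (L : Finset (Fin m)) (σ : Equiv.Perm (Fin m))
    (hσmem : ∀ u : Fin m, σ u ∈ L ↔ u.val < L.card)
    (hσinc : ∀ u v : Fin m, u < v → v.val < L.card → σ u < σ v)
    (hσdec : ∀ u v : Fin m, L.card ≤ u.val → u < v → σ v < σ u) :
    ordr L (List.finRange m) = List.ofFn σ := by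
  have hmem : ∀ s, s ∈ L ↔ (σ.symm s).val < L.card := fun s => by
    rw [← hσmem, Equiv.apply_symm_apply]
  have hA : (ordr L (List.finRange m)).Pairwise (fun s t => σ.symm s < σ.symm t) := by
    have hlt : (List.finRange m).Pairwise (· < ·) := List.pairwise_lt_finRange m
    rw [ordr_eq, List.pairwise_append]
    refine ⟨?_, ?_, ?_⟩
    · rw [List.pairwise_filter]
      refine hlt.imp ?_
      intro s t hst hs ht
      by_contra hc
      rcases lt_or_eq_of_le (not_lt.1 hc) with h | h
      · have := hσinc _ _ h ((hmem s).1 (by simpa using hs))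
        simp only [Equiv.apply_symm_apply] at this
        exact lt_asymm this hst
      · exact hst.ne (σ.symm.injective h).symm
    · rw [List.pairwise_reverse, List.pairwise_filter]
      refine hlt.imp ?_
      intro s t hst hs ht
      by_contra hc
      rcases lt_or_eq_of_le (not_lt.1 hc) with h | h
      · have hs' : s ∉ L := by simpa using hs
        rw [hmem] at hs'
        have := hσdec _ _ (not_lt.1 hs') h
        simp only [Equiv.apply_symm_apply] at this
        exact lt_asymm this hst
      · exact hst.ne (σ.symm.injective h)
    · intro s hs t ht
      have hs' : s ∈ L := by simpa using hs
      have ht' : t ∉ L := by simpa using ht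
      rw [hmem] at hs' ht'
      exact Fin.lt_def.2 (by omega)
  have hB : (List.ofFn σ).Pairwise (fun s t => σ.symm s < σ.symm t) := by
    rw [List.pairwise_ofFn]
    intro i j hij
    simpa using hij
  have hp : (ordr L (List.finRange m)).Perm (List.ofFn σ) := by
    refine (ordr_perm _ _).trans ?_
    rw [List.perm_ext_iff_of_nodup (List.nodup_finRange m) (List.nodup_ofFn.2 σ.injective)]
    intro x
    simpa [List.mem_ofFn] using σ.surjective x
  refine hp.eq_of_pairwise ?_ hA hB
  intro x y _ _ h1 h2
  exact absurd h1 (lt_asymm h2)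

theorem TL_cons [DecidableEq M] (P : Fin m → Fin k) (τ : M → T) (a : Fin m → M) (t : Fin m)
    (l : List (Fin m)) :
    TL P τ a (t :: l) = Pi.single (P t) {τ (a t)} + TL P τ a l := by
  simp [TL]

theorem greedy_gr [Fintype M] [DecidableEq M] (τ : M → T) (ord : Fin k → LinearOrder T) :
    ∀ (m : ℕ) (Q : Fin m → Fin k) (b : Fin m → M), TIsGreedy Q τ ord b →
    Gr ord (List.ofFn Q) (remT τ []) (TL Q τ b (List.finRange m)) (remT τ (List.ofFn b)) := by
  intro m
  induction m with
  | zero =>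
    intro Q b hb
    have := Gr.nil (ord := ord) (remT τ ([] : List M))
    simpa [TL] using this
  | succ m ih =>
    intro Q b hb
    have h1 := ih (fun i => Q i.castSucc) (fun i => b i.castSucc) ⟨fun u v huv =>
      Fin.castSucc_injective m (hb.1 huv), fun t x hx => hb.2 t.castSucc x (by
        intro s hs
        have hsm : s.val < m := lt_of_lt_of_le (Fin.lt_def.1 hs) (by simp [t.2.le])
        exact hx ⟨s.val, hsm⟩ (Fin.lt_def.2 (by simpa using Fin.lt_def.1 hs)))⟩
    have hnot : b (Fin.last m) ∉ List.ofFn (fun i : Fin m => b i.castSucc) := by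
      simp only [List.mem_ofFn, not_exists]
      intro i e
      exact (Fin.castSucc_lt_last i).ne (hb.1 e)
    have h2 := h1.snoc (Q (Fin.last m)) (τ (b (Fin.last m))) _ (remT_snoc τ _ _ hnot) (by
      intro y hy
      rw [mem_remT] at hy
      obtain ⟨x, hx, rfl⟩ := hy
      refine (@not_lt T (ord _) _ _).1 (hb.2 (Fin.last m) x ?_)
      intro s hs e
      apply hx
      have hsm : s.val < m := Fin.lt_def.1 hs
      simp only [List.mem_append, List.mem_ofFn]
      exact Or.inl ⟨⟨s.val, hsm⟩, e⟩)
    have e1 : List.ofFn Q = List.ofFn (fun i : Fin m => Q i.castSucc) ++ [Q (Fin.last m)] := by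
      rw [List.ofFn_succ']; simp
    have e2 : List.ofFn b = List.ofFn (fun i : Fin m => b i.castSucc) ++ [b (Fin.last m)] := by
      rw [List.ofFn_succ']; simp
    have e3 : TL Q τ b (List.finRange (m+1)) =
        TL (fun i : Fin m => Q i.castSucc) τ (fun i : Fin m => b i.castSucc) (List.finRange m)
          + Pi.single (Q (Fin.last m)) {τ (b (Fin.last m))} := by
      simp [TL, List.finRange_succ_last, Function.comp_def]
    rw [e1, e2, e3]
    exact h2

end GameLemmas

section Main

variable {M T : Type*} {m k : ℕ}

theorem TL_split [DecidableEq M] (P : Fin m → Fin k) (τ : M → T) (a : Fin m → M) (n : ℕ) :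
    TL P τ a (List.finRange m) =
      TL P τ a ((List.finRange m).take n) + TL P τ a ((List.finRange m).drop n) := by
  conv_lhs => rw [← List.take_append_drop n (List.finRange m)]
  simp only [TL, List.map_append, List.sum_append]

theorem TL_congr [DecidableEq M] (P : Fin m → Fin k) (τ : M → T) (a b : Fin m → M)
    (l : List (Fin m)) (h : ∀ t ∈ l, a t = b t) : TL P τ a l = TL P τ b l := by
  unfold TL
  congr 1
  refine List.map_congr_left ?_
  intro t ht
  rw [h t ht]

theorem main_ind [Fintype M] [DecidableEq M]
    (hm : m ≤ Fintype.card M) (τ : M → T) (P : Fin m → Fin k)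
    (ord : Fin k → LinearOrder T) (L : Finset (Fin m))
    (big : Fin m → (Fin m → M) → (Fin m → M) → Prop)
    (hext : ∀ t ∉ L, ∀ a b : Fin m → M, Function.Injective a → Function.Injective b →
      TKnightLT P τ ord (P t) a b → big t a b)
    (s : Strategy M m)
    (hs : SPE (fun t => if t ∈ L then TLoutLT P τ ord (P t) else big t) s)
    (l : List (Fin m)) : ∀ h : List M, h.Nodup → h.length ≤ m →
      l = (List.finRange m).drop h.length →
      ∃ F, Gr ord ((ordr L l).map P) (remT τ h) (TL P τ (s.play h) l) F := by
  induction l with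
  | nil =>
    intro h hn hl hd
    exact ⟨_, by simpa [TL, ordr] using Gr.nil (ord := ord) (remT τ h)⟩
  | cons t l ih =>
    intro h hn hl hd
    have hlen : h.length < m := by
      have := congrArg List.length hd
      simp at this
      omega
    rw [List.drop_eq_getElem_cons (by simpa using hlen)] at hd
    simp only [List.getElem_finRange, List.cons.injEq] at hd
    obtain ⟨htv, hd⟩ := hd
    have htv' : h.length = t.val := by rw [htv]; simp
    have hplay := s.play_step h hlen
    have hx := s.valid h hn hlen
    -- one-step facts
    have hstep : ∀ x, x ∉ h → (∃ F, Gr ord ((ordr L l).map P) (remT τ (h ++ [x]))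
        (TL P τ (s.play (h ++ [x])) l) F) := fun x hx =>
      ih (h ++ [x]) (nodup_snoc hn hx) (by simp; omega) (by simpa using hd)
    have hat : ∀ x, s.play (h ++ [x]) t = x := by
      intro x
      rw [s.play_getElem _ _ (by simp; omega)]
      simp [← htv']
    have hlow : ∀ x (u : Fin m), u < t → s.play h u = s.play (h ++ [x]) u := by
      intro x u hu
      have hu' : u.val < h.length := by rw [htv']; exact hu
      rw [s.play_getElem _ _ hu', s.play_getElem _ _ (by simp; omega)]
      simp [List.getElem_append_left hu']
    obtain ⟨G, hG⟩ := hstep _ hx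
    rw [← hplay] at hG
    have hatx : s.play h t = s.choice h := by
      conv_lhs => rw [hplay]
      exact hat _
    rw [TL_cons, hatx]
    by_cases ht : t ∈ L
    · -- lout turn
      refine ⟨G, ?_⟩
      rw [remT_snoc τ h _ hx]
      simp only [ordr, ht, if_true, List.map_cons]
      refine Gr.cons _ _ _ _ _ _ ?_ hG
      intro y hy
      rw [mem_remT] at hy
      obtain ⟨x, hxn, rfl⟩ := hy
      have hxh : x ∉ h := fun hh => hxn (by simp [hh])
      have hp := hs t h hn htv' x hxh
      simp only [ht, if_true] at hp
      refine (@not_lt T (ord _) _ _).1 fun hlt => hp ⟨t, rfl, hlow x, ?_⟩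
      rw [hatx, hat]
      exact hlt
    · -- knight turn
      simp only [ordr, ht, if_false, List.map_append, List.map_cons, List.map_nil]
      have hQlen : ((ordr L l).map P).length + 1 ≤ (remT τ h).card := by
        rw [remT_card τ h hn, List.length_map, ordr_length, hd]
        simp
        omega
      obtain ⟨D, F, hF⟩ := Gr.exists (ord := ord) ((ordr L l).map P) (remT τ h) (by omega)
      have hFne : F ≠ 0 := by
        rintro rfl
        have := hF.card
        simp at this hQlen
        omega
      obtain ⟨z, hz, hzm⟩ := exists_max_mset (ord (P t)) F hFne
      obtain ⟨F', rfl⟩ := Multiset.exists_cons_of_mem hz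
      refine ⟨F', ?_⟩
      have hgoal := hF.snoc (P t) z F' rfl (fun y hy => hzm y (by simp [hy]))
      obtain ⟨R0, hR0, hGr0⟩ := hF.unpicked z F' rfl
      have hzr : z ∈ remT τ h := by rw [hR0]; simp
      obtain ⟨x0, hx0, rfl⟩ := (mem_remT τ h z).1 hzr
      rw [remT_snoc τ h x0 hx0] at hR0
      have hR0' := (Multiset.cons_inj_right _).1 hR0
      obtain ⟨G', hG'⟩ := hstep x0 hx0
      rw [hR0'] at hG'
      obtain ⟨hD, -⟩ := hGr0.unique hG'
      have hF2 := hF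
      rw [remT_snoc τ h _ hx] at hF2
      obtain ⟨w, hw, hrel⟩ := hG.compare _ _ _ hF2
      have hwle : (ord (P t)).le w (τ x0) := hzm w (by rw [hw]; simp)
      suffices hEq : Pi.single (P t) {τ (s.choice h)} + TL P τ (s.play h) l =
          D + Pi.single (P t) {τ x0} by
        rw [hEq]; exact hgoal
      have hp := hs t h hn htv' x0 hx0
      simp only [ht, if_false] at hp
      have ia := s.play_injective h hn hl
      have ib := s.play_injective (h ++ [x0]) (nodup_snoc hn hx0) (by simp; omega)
      have hdrop : (List.finRange m).drop h.length = t :: l := by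
        rw [List.drop_eq_getElem_cons (by simpa using hlen), hd, htv]
        simp
      have htake : TL P τ (s.play (h ++ [x0])) ((List.finRange m).take h.length) =
          TL P τ (s.play h) ((List.finRange m).take h.length) := by
        refine TL_congr _ _ _ _ _ ?_
        intro u hu
        refine (hlow x0 u ?_).symm
        rw [List.mem_take_iff_getElem] at hu
        obtain ⟨i, hi, rfl⟩ := hu
        rw [Fin.lt_def]
        simp at hi ⊢
        omega
      generalize hH : TL P τ (s.play h) ((List.finRange m).take h.length) = H at htake
      have fa : TL P τ (s.play h) (List.finRange m) =
          H + (Pi.single (P t) {τ (s.choice h)} + TL P τ (s.play h) l) := by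
        rw [TL_split P τ _ h.length, hH, hdrop, TL_cons, hatx]
      have fb : TL P τ (s.play (h ++ [x0])) (List.finRange m) =
          H + (Pi.single (P t) {τ x0} + D) := by
        rw [TL_split P τ _ h.length, htake, hdrop, TL_cons, hat, hD]
      generalize TL P τ (s.play h) l = E at *
      by_contra hne
      refine hp (hext t ht _ _ ia ib (knight_of P τ ord (P t) _ _ ia ib ?_ ?_ ?_))
      · rw [fa, fb]
        intro e
        apply hne
        rw [add_comm D]
        exact add_left_cancel e
      · intro j hj
        rw [fa, fb]
        have hr := hrel j
        simp only [Pi.add_apply, Pi.single_eq_of_ne hj, zero_add]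
        exact Multiset.Rel.add (Multiset.rel_refl_of_refl_on fun x _ => (ord j).le_refl x) hr
      · intro hall
        rw [fa, fb] at *
        have hED : ∀ j, j ≠ P t → E j = D j := by
          intro j hj
          have := hall j hj
          simp only [Pi.add_apply, Pi.single_eq_of_ne hj, zero_add] at this
          exact add_left_cancel this
        have hc1 := hG.conserve
        have hc2 := hF2.conserve
        rw [hw, hc1, ← Finset.add_sum_erase _ E (Finset.mem_univ (P t)),
          ← Finset.add_sum_erase _ D (Finset.mem_univ (P t)),
          Finset.sum_congr rfl (fun j hj => hED j (Finset.ne_of_mem_erase hj)),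
          ← Multiset.singleton_add, ← Multiset.singleton_add w] at hc2
        have hc3 : {τ (s.choice h)} + E (P t) = {w} + D (P t) := by
          refine add_right_cancel (b := (∑ x ∈ Finset.univ.erase (P t), D x) + G) ?_
          calc _ = _ := by abel
            _ = _ := hc2
            _ = _ := by abel
        simp only [Pi.add_apply, Pi.single_eq_same]
        rw [hc3]
        refine Multiset.Rel.add (Multiset.rel_refl_of_refl_on fun x _ => (ord _).le_refl x) ?_
        rw [Multiset.singleton_add, Multiset.singleton_add]
        exact Multiset.Rel.cons hwle (Multiset.rel_refl_of_refl_on fun x _ => (ord _).le_refl x)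

end Main

/-- multiset version of the main theorem: in the typed mixed game,
every optimal play gives each player a plate with the same multiset of types as
any greedy play of the rearranged all-lout typed game. -/
theorem typed_mixed_game_division {M T : Type*} [Fintype M] [DecidableEq M]
    [Fintype T] [DecidableEq T] {m k : ℕ}
    (hm : m ≤ Fintype.card M) (τ : M → T) (P : Fin m → Fin k)
    (ord : Fin k → LinearOrder T)
    (L : Finset (Fin m)) (σ : Equiv.Perm (Fin m))
    (hσmem : ∀ u : Fin m, σ u ∈ L ↔ u.val < L.card)
    (hσinc : ∀ u v : Fin m, u < v → v.val < L.card → σ u < σ v)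
    (hσdec : ∀ u v : Fin m, L.card ≤ u.val → u < v → σ v < σ u)
    (big : Fin m → (Fin m → M) → (Fin m → M) → Prop)
    (hirr : ∀ t ∉ L, ∀ a : Fin m → M, Function.Injective a → ¬ big t a a)
    (htrans : ∀ t ∉ L, ∀ a b c : Fin m → M, Function.Injective a →
      Function.Injective b → Function.Injective c → big t a b → big t b c → big t a c)
    (hext : ∀ t ∉ L, ∀ a b : Fin m → M, Function.Injective a → Function.Injective b →
      TKnightLT P τ ord (P t) a b → big t a b)
    (b : Fin m → M) (hb : TIsGreedy (P ∘ σ) τ ord b)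
    (a : Fin m → M)
    (ha : OptimalPlay (fun t => if t ∈ L then TLoutLT P τ ord (P t) else big t) a) :
    ∀ i : Fin k, (plate P a i).val.map τ = (plate (P ∘ σ) b i).val.map τ := by
  obtain ⟨s, hs, rfl⟩ := ha
  intro i
  obtain ⟨F, hF⟩ := main_ind hm τ P ord L big hext s hs (List.finRange m) [] (by simp) (by simp)
    (by simp)
  have hg := greedy_gr τ ord m (P ∘ σ) b hb
  rw [ordr_finRange L σ hσmem hσinc hσdec, List.map_ofFn] at hF
  rw [plate_types P τ _ (s.play_injective [] (by simp) (by simp)), plate_types _ τ b hb.1,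
    (hF.unique hg).1]
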